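/- arXiv:2502.01556 — 6 statements merged into one kernel-verified Lean document; each statement's English description precedes it below -/
import Mathlib

section
/- Let η > 0, β > 0, J₀ ∈ ℝ^{N×p}, J' ∈ ℝ^{N'×p}, θ₀ ∈ ℝ^p, f₀, y ∈ ℝ^N and f₀' ∈ ℝ^{N'}. Let θ(t) be the solution of the regularized linearized gradient flow θ'(t) = −η[(J₀ᵀJ₀ + βI_p)(θ(t) − θ₀) + J₀ᵀ(f₀ − y)], θ(0) = θ₀. Then the linearized test predictions f₀' + J'(θ(t) − θ₀) converge as t → ∞ to f₀' + Θ̂'(Θ̂ + βI_N)^{-1}(y − f₀), where Θ̂ := J₀J₀ᵀ and Θ̂' := J'J₀ᵀ. -/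
open Matrix Filter

/-- If `θ(t)` solves the regularized linearized gradient flow
`θ'(t) = −η[(J₀ᵀJ₀ + βI_p)(θ(t) − θ₀) + J₀ᵀ(f₀ − y)]`, `θ(0) = θ₀`, with `β > 0`,
then the linearized test predictions `f₀' + J'(θ(t) − θ₀)` converge as `t → ∞` to
`f₀' + Θ̂'(Θ̂ + βI_N)⁻¹(y − f₀)`, where `Θ̂ = J₀J₀ᵀ` and `Θ̂' = J'J₀ᵀ`. -/
theorem linearized_flow_test_predictions_limit
    {N N' p : ℕ} (η β : ℝ) (hη : 0 < η) (hβ : 0 < β)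
    (J₀ : Matrix (Fin N) (Fin p) ℝ) (J' : Matrix (Fin N') (Fin p) ℝ)
    (θ₀ : Fin p → ℝ) (f₀ y : Fin N → ℝ) (f₀' : Fin N' → ℝ)
    (θ : ℝ → Fin p → ℝ) (hθ0 : θ 0 = θ₀)
    (hθ : ∀ t : ℝ, 0 ≤ t →
      HasDerivAt θ
        (-(η • ((J₀ᵀ * J₀ + β • (1 : Matrix (Fin p) (Fin p) ℝ)).mulVec (θ t - θ₀) +
          J₀ᵀ.mulVec (f₀ - y)))) t) :
    Tendsto (fun t : ℝ => f₀' + J'.mulVec (θ t - θ₀)) atTop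
      (nhds (f₀' + ((J' * J₀ᵀ) *
        (J₀ * J₀ᵀ + β • (1 : Matrix (Fin N) (Fin N) ℝ))⁻¹).mulVec (y - f₀))) := by
  set K : Matrix (Fin N) (Fin N) ℝ := J₀ * J₀ᵀ + β • (1 : Matrix (Fin N) (Fin N) ℝ) with hK
  set A : Matrix (Fin p) (Fin p) ℝ := J₀ᵀ * J₀ + β • (1 : Matrix (Fin p) (Fin p) ℝ) with hA
  have hKpd : K.PosDef := by
    have h1 : (J₀ * J₀ᵀ).PosSemidef := by
      simpa using Matrix.posSemidef_self_mul_conjTranspose J₀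
    exact Matrix.PosDef.posSemidef_add h1 (Matrix.PosDef.one.smul hβ)
  have hKu : IsUnit K.det := (Matrix.isUnit_iff_isUnit_det K).1 hKpd.isUnit
  have hAJ : A * J₀ᵀ = J₀ᵀ * K := by
    simp [hA, hK, Matrix.add_mul, Matrix.mul_add, Matrix.mul_assoc]
  set v : Fin p → ℝ := (J₀ᵀ * K⁻¹).mulVec (y - f₀) with hv
  have hAv : A.mulVec v = J₀ᵀ.mulVec (y - f₀) := by
    rw [hv, Matrix.mulVec_mulVec, ← Matrix.mul_assoc, hAJ, Matrix.mul_assoc,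
      Matrix.mul_nonsing_inv K hKu, Matrix.mul_one]
  set u : ℝ → Fin p → ℝ := fun t => θ t - θ₀ - v with hu
  have hud : ∀ t : ℝ, 0 ≤ t → HasDerivAt u (-(η • A.mulVec (u t))) t := by
    intro t ht
    have h := ((hθ t ht).sub_const θ₀).sub_const v
    have e : A.mulVec (θ t - θ₀) + J₀ᵀ.mulVec (f₀ - y) = A.mulVec (u t) := by
      have : f₀ - y = -(y - f₀) := by abel
      rw [this, Matrix.mulVec_neg, ← hAv, hu, Matrix.mulVec_sub A (θ t - θ₀) v, ← sub_eq_add_neg]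
    rw [e] at h
    exact h
  have hAge : ∀ w : Fin p → ℝ, β * (w ⬝ᵥ w) ≤ w ⬝ᵥ A.mulVec w := by
    intro w
    have e : w ⬝ᵥ A.mulVec w = (J₀.mulVec w) ⬝ᵥ (J₀.mulVec w) + β * (w ⬝ᵥ w) := by
      rw [hA, Matrix.add_mulVec, dotProduct_add, ← Matrix.mulVec_mulVec, Matrix.smul_mulVec,
        Matrix.one_mulVec, dotProduct_smul, smul_eq_mul, Matrix.dotProduct_mulVec,
        Matrix.vecMul_transpose]
    have h0 : 0 ≤ (J₀.mulVec w) ⬝ᵥ (J₀.mulVec w) :=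
      Finset.sum_nonneg fun i _ => mul_self_nonneg _
    linarith
  have hEd : ∀ t : ℝ, 0 ≤ t →
      HasDerivAt (fun t => u t ⬝ᵥ u t) (-(2 * η * (u t ⬝ᵥ A.mulVec (u t)))) t := by
    intro t ht
    have h := hasDerivAt_pi.1 (hud t ht)
    have h2 : HasDerivAt (fun t => ∑ i, u t i * u t i) _ t :=
      HasDerivAt.fun_sum (u := Finset.univ) fun i _ => (h i).mul (h i)
    refine h2.congr_deriv ?_
    simp only [dotProduct, Finset.mul_sum, ← Finset.sum_neg_distrib]
    refine Finset.sum_congr rfl fun i _ => ?_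
    simp only [Pi.neg_apply, Pi.smul_apply, smul_eq_mul]
    ring
  set g : ℝ → ℝ := fun t => (u t ⬝ᵥ u t) * Real.exp (2 * η * β * t) with hg
  have hgd : ∀ t : ℝ, 0 ≤ t → HasDerivAt g
      (-(2 * η * (u t ⬝ᵥ A.mulVec (u t))) * Real.exp (2 * η * β * t) +
        (u t ⬝ᵥ u t) * (Real.exp (2 * η * β * t) * (2 * η * β))) t := by
    intro t ht
    have h1 : HasDerivAt (fun t : ℝ => 2 * η * β * t) (2 * η * β) t := by
      simpa using (hasDerivAt_id t).const_mul (2 * η * β)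
    exact (hEd t ht).mul h1.exp
  have hanti : AntitoneOn g (Set.Ici 0) := by
    refine antitoneOn_of_deriv_nonpos (convex_Ici 0)
      (fun t ht => (hgd t ht).continuousAt.continuousWithinAt)
      (fun t ht => ?_) (fun t ht => ?_)
    · rw [interior_Ici] at ht
      exact (hgd t (le_of_lt ht)).differentiableAt.differentiableWithinAt
    · rw [interior_Ici] at ht
      rw [(hgd t (le_of_lt ht)).deriv]
      have h1 := mul_le_mul_of_nonneg_left (hAge (u t))
        (mul_pos hη (Real.exp_pos (2 * η * β * t))).le
      nlinarith [h1]
  have hbound : ∀ t : ℝ, 0 ≤ t → u t ⬝ᵥ u t ≤ g 0 * Real.exp (-(2 * η * β * t)) := by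
    intro t ht
    have h1 : g t ≤ g 0 := hanti (Set.mem_Ici.2 le_rfl) (Set.mem_Ici.2 ht) ht
    have h2 := mul_le_mul_of_nonneg_right h1 (Real.exp_pos (-(2 * η * β * t))).le
    have h3 : g t * Real.exp (-(2 * η * β * t)) = u t ⬝ᵥ u t := by
      rw [hg]
      simp only
      rw [mul_assoc, ← Real.exp_add, add_neg_cancel, Real.exp_zero, mul_one]
    linarith
  have hlim : Tendsto (fun t : ℝ => g 0 * Real.exp (-(2 * η * β * t))) atTop (nhds 0) := by
    have h1 : Tendsto (fun t : ℝ => 2 * η * β * t) atTop atTop :=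
      tendsto_id.const_mul_atTop (by positivity)
    simpa using (Real.tendsto_exp_neg_atTop_nhds_zero.comp h1).const_mul (g 0)
  have hu0 : Tendsto u atTop (nhds 0) := by
    rw [tendsto_pi_nhds]
    intro i
    have hsq : Tendsto (fun t => u t i ^ 2) atTop (nhds 0) := by
      refine tendsto_of_tendsto_of_tendsto_of_le_of_le' tendsto_const_nhds hlim
        (Eventually.of_forall fun t => sq_nonneg _) ?_
      filter_upwards [eventually_ge_atTop (0 : ℝ)] with t ht
      refine le_trans ?_ (hbound t ht)
      rw [sq]
      exact Finset.single_le_sum (f := fun i => u t i * u t i)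
        (fun j _ => mul_self_nonneg _) (Finset.mem_univ i)
    have h := hsq.sqrt
    simp only [Real.sqrt_sq_eq_abs, Real.sqrt_zero] at h
    exact (tendsto_zero_iff_abs_tendsto_zero _).2 h
  have hcont : Continuous fun w : Fin p → ℝ => f₀' + J'.mulVec (w + v) := by fun_prop
  have hfin := (hcont.tendsto 0).comp hu0
  have e1 : ((fun w : Fin p → ℝ => f₀' + J'.mulVec (w + v)) ∘ u)
      = fun t : ℝ => f₀' + J'.mulVec (θ t - θ₀) := by
    funext t
    simp [hu]
  rw [e1] at hfin
  simpa [hv, Matrix.mulVec_mulVec, Matrix.mul_assoc] using hfin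
end

section
/- Let η > 0, β ≥ 0, J₀ ∈ ℝ^{N×p}, θ₀ ∈ ℝ^p, f₀, y ∈ ℝ^N, and assume Θ̂ + βI_N is invertible, where Θ̂ := J₀J₀ᵀ. Define the gradient-descent sequence θ_0 := θ₀ and θ_{t+1} := θ_t − η[(J₀ᵀJ₀ + βI_p)(θ_t − θ₀) + J₀ᵀ(f₀ − y)]. Then for every natural number t, θ_t − θ₀ = J₀ᵀ(I_N − (I_N − η(Θ̂ + βI_N))^t)(Θ̂ + βI_N)^{-1}(y − f₀). -/
open Matrix

/-- For the gradient-descent recursion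
`θ_{t+1} = θ_t − η[(J₀ᵀJ₀ + βI_p)(θ_t − θ₀) + J₀ᵀ(f₀ − y)]`, `θ_0 = θ₀`,
with `Θ̂ + βI_N` invertible (`Θ̂ = J₀J₀ᵀ`), one has for every `t ∈ ℕ`
`θ_t − θ₀ = J₀ᵀ(I − (I − η(Θ̂ + βI))^t)(Θ̂ + βI)⁻¹(y − f₀)`. -/
theorem regularized_gradient_descent_linearized_formula
    {N p : ℕ} (η β : ℝ) (hη : 0 < η) (hβ : 0 ≤ β)
    (J₀ : Matrix (Fin N) (Fin p) ℝ) (θ₀ : Fin p → ℝ) (f₀ y : Fin N → ℝ)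
    (hinv : IsUnit (J₀ * J₀ᵀ + β • (1 : Matrix (Fin N) (Fin N) ℝ)))
    (θ : ℕ → Fin p → ℝ) (hθ0 : θ 0 = θ₀)
    (hrec : ∀ t : ℕ, θ (t + 1) = θ t -
      η • ((J₀ᵀ * J₀ + β • (1 : Matrix (Fin p) (Fin p) ℝ)).mulVec (θ t - θ₀) +
        J₀ᵀ.mulVec (f₀ - y))) :
    ∀ t : ℕ,
      θ t - θ₀ = J₀ᵀ.mulVec
        ((((1 : Matrix (Fin N) (Fin N) ℝ) -
            ((1 : Matrix (Fin N) (Fin N) ℝ) -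
              η • (J₀ * J₀ᵀ + β • (1 : Matrix (Fin N) (Fin N) ℝ))) ^ t) *
          (J₀ * J₀ᵀ + β • (1 : Matrix (Fin N) (Fin N) ℝ))⁻¹).mulVec (y - f₀)) := by
  intro t
  have hAA : (J₀ * J₀ᵀ + β • (1 : Matrix (Fin N) (Fin N) ℝ)) *
      (J₀ * J₀ᵀ + β • (1 : Matrix (Fin N) (Fin N) ℝ))⁻¹ = 1 :=
    Matrix.mul_nonsing_inv _ ((Matrix.isUnit_iff_isUnit_det _).mp hinv)
  have hcomm : (J₀ᵀ * J₀ + β • (1 : Matrix (Fin p) (Fin p) ℝ)) * J₀ᵀ =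
      J₀ᵀ * (J₀ * J₀ᵀ + β • (1 : Matrix (Fin N) (Fin N) ℝ)) := by
    simp [Matrix.add_mul, Matrix.mul_add, Matrix.mul_assoc]
  generalize J₀ * J₀ᵀ + β • (1 : Matrix (Fin N) (Fin N) ℝ) = A at *
  generalize J₀ᵀ * J₀ + β • (1 : Matrix (Fin p) (Fin p) ℝ) = B at *
  induction t with
  | zero => simp [hθ0]
  | succ t ih =>
    have key : (1 - (1 - η • A) ^ (t + 1)) * A⁻¹ =
        (1 - (1 - η • A) ^ t) * A⁻¹ - η • (A * ((1 - (1 - η • A) ^ t) * A⁻¹) - 1) := by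
      rw [pow_succ']
      generalize (1 - η • A) ^ t = P
      rw [← hAA]
      simp only [sub_mul, mul_sub, one_mul, smul_mul_assoc, smul_sub, mul_assoc, hAA]
      abel
    have h1 : θ (t + 1) - θ₀ = (θ t - θ₀) -
        η • (B.mulVec (θ t - θ₀) - J₀ᵀ.mulVec (y - f₀)) := by
      rw [hrec t, ← neg_sub y f₀, Matrix.mulVec_neg]
      abel_nf
    rw [h1, ih, key]
    generalize (1 - (1 - η • A) ^ t) * A⁻¹ = V
    generalize y - f₀ = w
    rw [Matrix.mulVec_mulVec _ B, hcomm, Matrix.sub_mulVec, Matrix.smul_mulVec,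
      Matrix.sub_mulVec, Matrix.one_mulVec, Matrix.mulVec_sub, Matrix.mulVec_smul,
      Matrix.mulVec_sub, ← Matrix.mulVec_mulVec, ← Matrix.mulVec_mulVec]
end

section
/- Let η > 0, β ≥ 0, J₀ ∈ ℝ^{N×p}, J' ∈ ℝ^{N'×p}, θ₀ ∈ ℝ^p, f₀, y ∈ ℝ^N, f₀' ∈ ℝ^{N'}, and assume Θ̂ + βI_N is invertible, where Θ̂ := J₀J₀ᵀ. Define θ_0 := θ₀ and θ_{t+1} := θ_t − η[(J₀ᵀJ₀ + βI_p)(θ_t − θ₀) + J₀ᵀ(f₀ − y)]. Then for every natural number t, the linearized test predictions satisfy f₀' + J'(θ_t − θ₀) = f₀' + Θ̂'(I_N − (I_N − η(Θ̂ + βI_N))^t)(Θ̂ + βI_N)^{-1}(y − f₀), where Θ̂' := J'J₀ᵀ. -/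
open Matrix

/-- For the gradient-descent recursion
`θ_{t+1} = θ_t − η[(J₀ᵀJ₀ + βI_p)(θ_t − θ₀) + J₀ᵀ(f₀ − y)]`, `θ_0 = θ₀`, with
`Θ̂ + βI_N` invertible (`Θ̂ = J₀J₀ᵀ`), the linearized test predictions satisfy, for
every `t ∈ ℕ`,
`f₀' + J'(θ_t − θ₀) = f₀' + Θ̂'(I − (I − η(Θ̂ + βI))^t)(Θ̂ + βI)⁻¹(y − f₀)`,
where `Θ̂' = J'J₀ᵀ`. -/
theorem regularized_gradient_descent_test_predictions_formula
    {N N' p : ℕ} (η β : ℝ) (hη : 0 < η) (hβ : 0 ≤ β)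
    (J₀ : Matrix (Fin N) (Fin p) ℝ) (J' : Matrix (Fin N') (Fin p) ℝ)
    (θ₀ : Fin p → ℝ) (f₀ y : Fin N → ℝ) (f₀' : Fin N' → ℝ)
    (hinv : IsUnit (J₀ * J₀ᵀ + β • (1 : Matrix (Fin N) (Fin N) ℝ)))
    (θ : ℕ → Fin p → ℝ) (hθ0 : θ 0 = θ₀)
    (hrec : ∀ t : ℕ, θ (t + 1) = θ t -
      η • ((J₀ᵀ * J₀ + β • (1 : Matrix (Fin p) (Fin p) ℝ)).mulVec (θ t - θ₀) +
        J₀ᵀ.mulVec (f₀ - y))) :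
    ∀ t : ℕ,
      f₀' + J'.mulVec (θ t - θ₀) =
        f₀' + ((J' * J₀ᵀ) *
          (((1 : Matrix (Fin N) (Fin N) ℝ) -
              ((1 : Matrix (Fin N) (Fin N) ℝ) -
                η • (J₀ * J₀ᵀ + β • (1 : Matrix (Fin N) (Fin N) ℝ))) ^ t) *
            (J₀ * J₀ᵀ + β • (1 : Matrix (Fin N) (Fin N) ℝ))⁻¹)).mulVec (y - f₀) := by
  have key : ∀ t : ℕ, θ t - θ₀ = (J₀ᵀ *
      (((1 : Matrix (Fin N) (Fin N) ℝ) -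
          ((1 : Matrix (Fin N) (Fin N) ℝ) -
            η • (J₀ * J₀ᵀ + β • (1 : Matrix (Fin N) (Fin N) ℝ))) ^ t) *
        (J₀ * J₀ᵀ + β • (1 : Matrix (Fin N) (Fin N) ℝ))⁻¹)).mulVec (y - f₀) := by
    have hcomm : (J₀ᵀ * J₀ + β • (1 : Matrix (Fin p) (Fin p) ℝ)) * J₀ᵀ =
        J₀ᵀ * (J₀ * J₀ᵀ + β • (1 : Matrix (Fin N) (Fin N) ℝ)) := by
      simp [Matrix.add_mul, Matrix.mul_add, Matrix.mul_assoc]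
    have hK := Matrix.mul_nonsing_inv _ ((Matrix.isUnit_iff_isUnit_det _).mp hinv)
    generalize J₀ * J₀ᵀ + β • (1 : Matrix (Fin N) (Fin N) ℝ) = K at *
    intro t
    induction t with
    | zero => simp [hθ0]
    | succ t ih =>
      have hM : (1 - (1 - η • K) ^ (t + 1)) * K⁻¹ =
          (1 - (1 - η • K) ^ t) * K⁻¹ -
            η • (K * ((1 - (1 - η • K) ^ t) * K⁻¹)) + η • 1 := by
        rw [pow_succ', ← hK]
        generalize (1 - η • K) ^ t = P
        simp only [Matrix.sub_mul, Matrix.mul_sub, Matrix.one_mul, Matrix.smul_mul,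
          Matrix.mul_assoc, smul_sub, hK]
        abel
      have hneg : f₀ - y = -(y - f₀) := by abel
      rw [hM, hrec, sub_right_comm, ih, hneg]
      generalize (1 - (1 - η • K) ^ t) * K⁻¹ = M
      rw [Matrix.mulVec_mulVec, ← Matrix.mul_assoc, hcomm]
      simp only [Matrix.mul_add, Matrix.mul_sub, Matrix.mul_smul, Matrix.add_mulVec,
        Matrix.sub_mulVec, Matrix.smul_mulVec, Matrix.mulVec_neg, Matrix.mul_one,
        Matrix.mul_assoc, smul_add, smul_neg]
      abel
  intro t
  rw [key t, Matrix.mulVec_mulVec, Matrix.mul_assoc]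
end

section
/- Let A ∈ ℝ^{p×p} be symmetric with ⟨v, Av⟩ ≥ c‖v‖² for all v ∈ ℝ^p, where c > 0, let η > 0 and D ≥ 0, and let Δ : [0,∞) → ℝ^p be continuous with ‖Δ(t)‖ ≤ D for all t ≥ 0. If x : [0,∞) → ℝ^p is a continuously differentiable solution of x'(t) = −ηA x(t) − ηΔ(t) with x(0) = 0, then ‖x(t)‖ ≤ D/c for all t ≥ 0. -/
open Matrix
open scoped RealInnerProductSpace

/-- Let `A` be symmetric with `⟨v, Av⟩ ≥ c‖v‖²` (`c > 0`), `η > 0`,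
`D ≥ 0`, and let `Δ : [0,∞) → ℝ^p` be continuous with `‖Δ(t)‖ ≤ D`.  If `x` solves
`x'(t) = −ηA x(t) − ηΔ(t)` with `x(0) = 0`, then `‖x(t)‖ ≤ D/c` for all `t ≥ 0`. -/
theorem perturbed_linear_flow_bound
    {p : ℕ} (A : Matrix (Fin p) (Fin p) ℝ) (hA : A.IsSymm) (c η D : ℝ)
    (hc : 0 < c) (hη : 0 < η) (hD : 0 ≤ D)
    (hcA : ∀ v : EuclideanSpace ℝ (Fin p), c * ‖v‖ ^ 2 ≤ ⟪v, Matrix.toEuclideanLin A v⟫)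
    (Δ : ℝ → EuclideanSpace ℝ (Fin p)) (hΔcont : ContinuousOn Δ (Set.Ici (0 : ℝ)))
    (hΔ : ∀ t : ℝ, 0 ≤ t → ‖Δ t‖ ≤ D)
    (x : ℝ → EuclideanSpace ℝ (Fin p)) (hx0 : x 0 = 0)
    (hx : ∀ t : ℝ, 0 ≤ t →
      HasDerivAt x (-(η • Matrix.toEuclideanLin A (x t)) - η • Δ t) t) :
    ∀ t : ℝ, 0 ≤ t → ‖x t‖ ≤ D / c := by
  intro t ht
  let g : ℝ → ℝ := fun s => Real.exp (η * c * s) * (‖x s‖ ^ 2 - (D / c) ^ 2)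
  have hg : ∀ s : ℝ, 0 ≤ s → HasDerivAt g
      (Real.exp (η * c * s) * (η * c) * (‖x s‖ ^ 2 - (D / c) ^ 2) +
        Real.exp (η * c * s) *
          (2 * ⟪x s, -(η • Matrix.toEuclideanLin A (x s)) - η • Δ s⟫)) s := by
    intro s hs
    have h1 : HasDerivAt (fun s : ℝ => Real.exp (η * c * s))
        (Real.exp (η * c * s) * (η * c)) s := by
      have := ((hasDerivAt_id s).const_mul (η * c)).exp
      simpa using this
    exact h1.mul ((hx s hs).norm_sq.sub_const _)
  have hanti : AntitoneOn g (Set.Ici 0) := by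
    refine antitoneOn_of_deriv_nonpos (convex_Ici 0)
      (fun s hs => (hg s hs).continuousAt.continuousWithinAt) ?_ ?_
    · intro s hs
      rw [interior_Ici] at hs
      exact (hg s (le_of_lt hs)).differentiableAt.differentiableWithinAt
    · intro s hs
      rw [interior_Ici] at hs
      have hs' : 0 ≤ s := le_of_lt hs
      rw [(hg s hs').deriv]
      have e1 : ⟪x s, -(η • Matrix.toEuclideanLin A (x s)) - η • Δ s⟫ =
          -(η * ⟪x s, Matrix.toEuclideanLin A (x s)⟫) - η * ⟪x s, Δ s⟫ := by
        rw [inner_sub_right, inner_neg_right, real_inner_smul_right, real_inner_smul_right]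
      rw [e1]
      have h2 := hcA (x s)
      have h3 : -(‖x s‖ * D) ≤ ⟪x s, Δ s⟫ := by
        have h4 := abs_le.mp (abs_real_inner_le_norm (x s) (Δ s))
        have h5 := mul_le_mul_of_nonneg_left (hΔ s hs') (norm_nonneg (x s))
        linarith [h4.1]
      obtain ⟨q, hq⟩ : ∃ q, q = D / c := ⟨_, rfl⟩
      have hDq : D = c * q := by rw [hq]; field_simp
      rw [← hq]
      rw [hDq] at h3
      generalize ⟪x s, Matrix.toEuclideanLin A (x s)⟫ = a at *
      generalize ⟪x s, Δ s⟫ = b at *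
      generalize ‖x s‖ = n at *
      have h6 : c * (n ^ 2 - q ^ 2) + 2 * (-a - b) ≤ 0 := by
        nlinarith [mul_nonneg hc.le (sq_nonneg (n - q))]
      have h7 := mul_nonpos_of_nonneg_of_nonpos
        (mul_nonneg (Real.exp_pos (η * c * s)).le hη.le) h6
      linarith
  have h0 := hanti (Set.mem_Ici.mpr le_rfl) (Set.mem_Ici.mpr ht) ht
  have hg0 : g 0 ≤ 0 := by
    simp only [g, hx0]
    simp
    positivity
  have hgt : Real.exp (η * c * t) * (‖x t‖ ^ 2 - (D / c) ^ 2) ≤ 0 := h0.trans hg0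
  have h8 : ‖x t‖ ^ 2 ≤ (D / c) ^ 2 := by
    by_contra! h
    have := mul_pos (Real.exp_pos (η * c * t)) (sub_pos.mpr h)
    linarith
  exact (sq_le_sq₀ (norm_nonneg _) (by positivity)).mp h8
end

section
/- Let F : ℝ^p → ℝ^k be continuously differentiable with Jacobian DF, let θ : [0,∞) → ℝ^p be continuously differentiable with θ(0) = θ₀, and suppose there exist ε ≥ 0, a ≥ 0 and b > 0 such that ‖DF(θ(t)) − DF(θ₀)‖_op ≤ ε and ‖θ'(t)‖ ≤ a e^{−bt} for all t ≥ 0. Then for all t ≥ 0, the linearization error satisfies ‖F(θ(t)) − F(θ₀) − DF(θ₀)(θ(t) − θ₀)‖ ≤ εa/b. -/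
/-- If `F : ℝ^p → ℝ^k` is `C¹`, `θ` is a `C¹` curve with `θ(0) = θ₀`,
`‖DF(θ(t)) − DF(θ₀)‖_op ≤ ε` and `‖θ'(t)‖ ≤ a e^{−bt}` for all `t ≥ 0`, then the
linearization error satisfies
`‖F(θ(t)) − F(θ₀) − DF(θ₀)(θ(t) − θ₀)‖ ≤ εa/b` for all `t ≥ 0`. -/
theorem linearization_error_bound_flow
    {p k : ℕ} (F : EuclideanSpace ℝ (Fin p) → EuclideanSpace ℝ (Fin k))
    (hF : ContDiff ℝ 1 F)
    (θ₀ : EuclideanSpace ℝ (Fin p)) (θ θ' : ℝ → EuclideanSpace ℝ (Fin p))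
    (hθ0 : θ 0 = θ₀)
    (hderiv : ∀ t : ℝ, HasDerivAt θ (θ' t) t) (hcont : Continuous θ')
    (ε a b : ℝ) (hε : 0 ≤ ε) (ha : 0 ≤ a) (hb : 0 < b)
    (hJ : ∀ t : ℝ, 0 ≤ t → ‖fderiv ℝ F (θ t) - fderiv ℝ F θ₀‖ ≤ ε)
    (hspeed : ∀ t : ℝ, 0 ≤ t → ‖θ' t‖ ≤ a * Real.exp (-(b * t))) :
    ∀ t : ℝ, 0 ≤ t →
      ‖F (θ t) - F θ₀ - fderiv ℝ F θ₀ (θ t - θ₀)‖ ≤ ε * a / b := by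
  intro t ht
  have hg : ∀ s : ℝ, HasDerivAt (fun s => F (θ s) - F θ₀ - fderiv ℝ F θ₀ (θ s - θ₀))
      ((fderiv ℝ F (θ s) - fderiv ℝ F θ₀) (θ' s)) s := by
    intro s
    have hFd : HasFDerivAt F (fderiv ℝ F (θ s)) (θ s) :=
      ((hF.differentiable one_ne_zero) (θ s)).hasFDerivAt
    have h1 := (hFd.comp_hasDerivAt s (hderiv s)).sub_const (F θ₀)
    have h2 := (fderiv ℝ F θ₀).hasFDerivAt.comp_hasDerivAt s ((hderiv s).sub_const θ₀)
    exact h1.sub h2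
  have hB : ∀ s : ℝ, HasDerivAt (fun s => ε * a / b * (1 - Real.exp (-(b * s))))
      (ε * (a * Real.exp (-(b * s)))) s := by
    intro s
    have h1 : HasDerivAt (fun s : ℝ => -(b * s)) (-(b * 1)) s :=
      ((hasDerivAt_id s).const_mul b).neg
    have h2 := ((h1.exp).const_sub 1).const_mul (ε * a / b)
    refine h2.congr_deriv ?_
    have hb' : b ≠ 0 := hb.ne'
    field_simp
  have key := image_norm_le_of_norm_deriv_right_le_deriv_boundary (a := 0) (b := t)
    (fun s _ => (hg s).continuousAt.continuousWithinAt)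
    (fun s _ => (hg s).hasDerivWithinAt) (by simp [hθ0]) hB
    (fun s hs => (ContinuousLinearMap.le_opNorm _ _).trans
      (mul_le_mul (hJ s hs.1) (hspeed s hs.1) (norm_nonneg _) hε)) (Set.right_mem_Icc.2 ht)
  refine key.trans ?_
  have h0 : 0 ≤ ε * a / b := by positivity
  have h1 := Real.exp_pos (-(b * t))
  exact mul_le_of_le_one_right h0 (by linarith)
end

section
/- Let F : ℝ^p → ℝ^k be continuously differentiable with Jacobian DF, let (θ_t)_{t∈ℕ} be a sequence in ℝ^p, and suppose there exist ε ≥ 0, a ≥ 0, η > 0 and c > 0 with 0 < ηc < 1 such that for every t: ‖θ_{t+1} − θ_t‖ ≤ ηa(1 − ηc)^t, and ‖DF(ξ) − DF(θ₀)‖_op ≤ ε for every ξ on the segment joining θ_t and θ_{t+1}. Then for every t ∈ ℕ, ‖F(θ_t) − F(θ₀) − DF(θ₀)(θ_t − θ₀)‖ ≤ εa/c. -/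
/-- If `F : ℝ^p → ℝ^k` is `C¹`, `(θ_t)` is a sequence with
`‖θ_{t+1} − θ_t‖ ≤ ηa(1 − ηc)^t` and `‖DF(ξ) − DF(θ₀)‖_op ≤ ε` for every `ξ` on the
segment joining `θ_t` and `θ_{t+1}` (where `0 < ηc < 1`), then for every `t ∈ ℕ`,
`‖F(θ_t) − F(θ₀) − DF(θ₀)(θ_t − θ₀)‖ ≤ εa/c`. -/
theorem linearization_error_bound_discrete
    {p k : ℕ} (F : EuclideanSpace ℝ (Fin p) → EuclideanSpace ℝ (Fin k))
    (hF : ContDiff ℝ 1 F)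
    (θ : ℕ → EuclideanSpace ℝ (Fin p))
    (ε a η c : ℝ) (hε : 0 ≤ ε) (ha : 0 ≤ a) (hη : 0 < η) (hc : 0 < c)
    (hηc : η * c < 1)
    (hstep : ∀ t : ℕ, ‖θ (t + 1) - θ t‖ ≤ η * a * (1 - η * c) ^ t)
    (hJ : ∀ t : ℕ, ∀ ξ ∈ segment ℝ (θ t) (θ (t + 1)),
      ‖fderiv ℝ F ξ - fderiv ℝ F (θ 0)‖ ≤ ε) :
    ∀ t : ℕ,
      ‖F (θ t) - F (θ 0) - fderiv ℝ F (θ 0) (θ t - θ 0)‖ ≤ ε * a / c := by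
  have key : ∀ t : ℕ, ‖F (θ t) - F (θ 0) - fderiv ℝ F (θ 0) (θ t - θ 0)‖
      ≤ ε * a / c * (1 - (1 - η * c) ^ t) := by
    intro t
    induction t with
    | zero => simp
    | succ t ih =>
      have h1 : ‖F (θ (t + 1)) - F (θ t) - fderiv ℝ F (θ 0) (θ (t + 1) - θ t)‖
          ≤ ε * ‖θ (t + 1) - θ t‖ :=
        (convex_segment (θ t) (θ (t + 1))).norm_image_sub_le_of_norm_fderiv_le' (𝕜 := ℝ)
          (fun x _ => (hF.differentiable (by norm_num)).differentiableAt) (hJ t)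
          (left_mem_segment ℝ _ _) (right_mem_segment ℝ _ _)
      have h2 := mul_le_mul_of_nonneg_left (hstep t) hε
      have h3 : F (θ (t + 1)) - F (θ 0) - fderiv ℝ F (θ 0) (θ (t + 1) - θ 0)
          = (F (θ (t + 1)) - F (θ t) - fderiv ℝ F (θ 0) (θ (t + 1) - θ t))
            + (F (θ t) - F (θ 0) - fderiv ℝ F (θ 0) (θ t - θ 0)) := by
        simp only [map_sub]
        abel
      have h4 : ε * a / c * (1 - (1 - η * c) ^ (t + 1))
          = ε * (η * a * (1 - η * c) ^ t) + ε * a / c * (1 - (1 - η * c) ^ t) := by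
        field_simp
        ring
      rw [h3, h4]
      exact (norm_add_le _ _).trans (add_le_add (h1.trans h2) ih)
  intro t
  refine (key t).trans (mul_le_of_le_one_right (by positivity) ?_)
  have : 0 ≤ (1 - η * c) ^ t := pow_nonneg (by linarith) t
  linarith
end
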